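/- Let β : Fin r → ℝ^m and β' : Fin r' → ℝ^m be injective, and let P_i (i ∈ Fin r) and P'_j (j ∈ Fin r') be nonzero real polynomials in m variables. If ∑_i P_i(u)·exp(β_i·u) = ∑_j P'_j(u)·exp(β'_j·u) for every u ∈ ℝ^m (with β·u the standard dot product), then r = r' and there is a bijection e : Fin r → Fin r' with β'_{e(i)} = β_i and P'_{e(i)} = P_i for all i. In particular the two sets of exponent vectors {β_i} and {β'_j} coincide. -/

import Mathlib

/-!
Translations act on functions `A → R`, and a polynomial times a character `χ` is a simultaneous
generalized eigenvector of all of them: the commutator of the translation by `v` with multiplication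
by an additive map `a` is `a v` times that same translation, so multiplication by `a` preserves
generalized eigenspaces. Simultaneous generalized eigenspaces of commuting endomorphisms are
independent, so products of polynomials with distinct characters are linearly independent.
-/

open MvPolynomial

section Commutator

variable {R M : Type*} [CommRing R] [AddCommGroup M] [Module R M]

theorem pow_succ_apply_eq_zero_of_commute_lie {N X : Module.End R M} (h : Commute N ⁅N, X⁆)
    {k : ℕ} {x : M} (hx : (N ^ k) x = 0) : (N ^ (k + 1)) (X x) = 0 := by
  induction k generalizing x with
  | zero =>
    have hx : x = 0 := hx
    rw [hx, map_zero, map_zero]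
  | succ k ih =>
    have apply_X : N (X x) = X (N x) + ⁅N, X⁆ x := (add_sub_cancel (X (N x)) (N (X x))).symm
    have pow_lie : (N ^ (k + 1)) (⁅N, X⁆ x) = 0 := by
      rw [← Module.End.mul_apply, (h.pow_left _).eq, Module.End.mul_apply, hx, map_zero]
    rw [pow_succ, Module.End.mul_apply] at hx
    rw [pow_succ, Module.End.mul_apply, apply_X, map_add, ih hx, pow_lie, add_zero]

theorem apply_mem_maxGenEigenspace_of_commute_lie {f X : Module.End R M} (h : Commute f ⁅f, X⁆)
    {μ : R} {x : M} (hx : x ∈ f.maxGenEigenspace μ) : X x ∈ f.maxGenEigenspace μ := by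
  rw [Module.End.mem_maxGenEigenspace] at hx ⊢
  obtain ⟨k, hk⟩ := hx
  have lie_sub_smul : ⁅f - μ • (1 : Module.End R M), X⁆ = ⁅f, X⁆ := by
    simp [Ring.lie_def, sub_mul, mul_sub]
  have commute_sub_smul : Commute (f - μ • (1 : Module.End R M)) ⁅f - μ • 1, X⁆ := by
    rw [lie_sub_smul]
    exact h.sub_left ((Commute.one_left _).smul_left μ)
  exact ⟨k + 1, pow_succ_apply_eq_zero_of_commute_lie commute_sub_smul hk⟩

end Commutator

section Translation

variable {R A : Type*} [CommRing R]

variable (R) in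
/-- The translation operator `f ↦ f (· + v)` on `R`-valued functions, whose simultaneous
generalized eigenvectors include the products of polynomials with characters. -/
def translation [Add A] (v : A) : Module.End R (A → R) :=
  LinearMap.funLeft R R (· + v)

@[simp]
theorem translation_apply [Add A] (v : A) (f : A → R) (u : A) :
    translation R v f u = f (u + v) :=
  rfl

theorem commute_translation [AddCommSemigroup A] (v w : A) :
    Commute (translation R v) (translation R w) := by
  ext f u
  simp only [Module.End.mul_apply, translation_apply, add_right_comm]

theorem lie_translation_mulLeft [AddZeroClass A] (v : A) (a : A →+ R) :
    ⁅translation R v, LinearMap.mulLeft R (a : A → R)⁆ = a v • translation R v := by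
  refine LinearMap.ext fun f => funext fun u => ?_
  simp only [Ring.lie_def, LinearMap.sub_apply, Module.End.mul_apply, LinearMap.mulLeft_apply,
    LinearMap.smul_apply, translation_apply, Pi.sub_apply, Pi.mul_apply, Pi.smul_apply, map_add,
    smul_eq_mul]
  ring

/-- The simultaneous generalized eigenspace of all translations, the eigenvalue of the translation
by `v` being `χ v`. -/
def characterGenEigenspace [AddMonoid A] (χ : AddChar A R) : Submodule R (A → R) :=
  ⨅ v, (translation R v).maxGenEigenspace (χ v)

theorem iSupIndep_characterGenEigenspace [IsDomain R] [AddCommMonoid A] :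
    iSupIndep (characterGenEigenspace : AddChar A R → Submodule R (A → R)) :=
  (Module.End.independent_iInf_maxGenEigenspace_of_forall_mapsTo (translation R)
    fun v w => Module.End.mapsTo_maxGenEigenspace_of_comm (commute_translation w v)).comp
    DFunLike.coe_injective

theorem addChar_mem_characterGenEigenspace [AddMonoid A] (χ : AddChar A R) :
    (χ : A → R) ∈ characterGenEigenspace χ := by
  rw [characterGenEigenspace, Module.End.mem_iInf_maxGenEigenspace_iff]
  refine fun v => ⟨1, funext fun u => ?_⟩
  simp [AddChar.map_add_eq_mul, mul_comm]

theorem addMonoidHom_mul_mem_characterGenEigenspace [AddMonoid A] (a : A →+ R) {χ : AddChar A R}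
    {f : A → R} (hf : f ∈ characterGenEigenspace χ) : ⇑a * f ∈ characterGenEigenspace χ := by
  rw [characterGenEigenspace, Submodule.mem_iInf] at hf ⊢
  intro v
  have commute_lie : Commute (translation R v)
      ⁅translation R v, LinearMap.mulLeft R (a : A → R)⁆ := by
    rw [lie_translation_mulLeft]
    exact (Commute.refl _).smul_right _
  exact apply_mem_maxGenEigenspace_of_commute_lie commute_lie (hf v)

theorem eval_mul_addChar_mem_characterGenEigenspace [AddMonoid A] {σ : Type*} (a : σ → A →+ R)
    (P : MvPolynomial σ R) (χ : AddChar A R) :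
    (fun u => eval (fun i => a i u) P * χ u) ∈ characterGenEigenspace χ := by
  induction P using MvPolynomial.induction_on with
  | C c =>
    simp only [eval_C]
    exact (characterGenEigenspace χ).smul_mem c (addChar_mem_characterGenEigenspace χ)
  | add P Q hP hQ =>
    simp only [map_add, add_mul]
    exact (characterGenEigenspace χ).add_mem hP hQ
  | mul_X P i hP =>
    convert addMonoidHom_mul_mem_characterGenEigenspace (a i) hP using 1
    ext u
    simp only [map_mul, eval_X, Pi.mul_apply]
    ring

end Translation

section Reindexing

variable {ι ι' α M : Type*} [AddCommMonoid M]

theorem support_mapDomain_eq_range {x : ι → α} (hx : x.Injective) {F : ι →₀ M}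
    (hF : ∀ i, F i ≠ 0) : Function.support (F.mapDomain x) = Set.range x := by
  ext b
  refine ⟨fun hb => not_imp_comm.1 (Finsupp.mapDomain_of_notMem_range F b) hb, ?_⟩
  rintro ⟨i, rfl⟩
  rw [Function.mem_support, Finsupp.mapDomain_apply hx]
  exact hF i

theorem exists_equiv_of_mapDomain_eq_mapDomain {x : ι → α} {x' : ι' → α} (hx : x.Injective)
    (hx' : x'.Injective) {F : ι →₀ M} {F' : ι' →₀ M} (hF : ∀ i, F i ≠ 0) (hF' : ∀ j, F' j ≠ 0)
    (h : F.mapDomain x = F'.mapDomain x') :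
    ∃ e : ι ≃ ι', ∀ i, x' (e i) = x i ∧ F' (e i) = F i := by
  have range_eq : Set.range x = Set.range x' := by
    rw [← support_mapDomain_eq_range hx hF, h, support_mapDomain_eq_range hx' hF']
  let e : ι ≃ ι' := (Equiv.ofInjective x hx).trans
    ((Equiv.setCongr range_eq).trans (Equiv.ofInjective x' hx').symm)
  have he (i : ι) : x' (e i) = x i := Equiv.apply_ofInjective_symm hx' _
  refine ⟨e, fun i => ⟨he i, ?_⟩⟩
  rw [← Finsupp.mapDomain_apply hx', ← h, he, Finsupp.mapDomain_apply hx]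

end Reindexing

section Uniqueness

variable {σ R : Type*} [CommRing R]

theorem finsuppSum_mapDomain_eval_mul_addChar {ι : Type*} [Fintype ι]
    (χ : ι → AddChar (σ → R) R) (F : ι →₀ MvPolynomial σ R) (u : σ → R) :
    ((F.mapDomain χ).sum fun ψ Q => eval u Q * ψ u) = ∑ i, eval u (F i) * χ i u := by
  rw [Finsupp.sum_mapDomain_index (fun _ => by rw [map_zero, zero_mul])
    fun _ _ _ => by rw [map_add, add_mul]]
  exact Finsupp.sum_fintype _ _ fun _ => by rw [map_zero, zero_mul]

variable [IsDomain R] [Infinite R]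

theorem eq_zero_of_eval_mul_addChar_eq_zero {P : MvPolynomial σ R} {χ : AddChar (σ → R) R}
    (h : ∀ u, eval u P * χ u = 0) : P = 0 := by
  refine MvPolynomial.funext fun u => ?_
  rw [map_zero]
  exact (mul_eq_zero.1 (h u)).resolve_right (χ.val_isUnit u).ne_zero

theorem eq_zero_of_finsuppSum_eval_mul_addChar_eq_zero
    {F : AddChar (σ → R) R →₀ MvPolynomial σ R}
    (h : ∀ u, (F.sum fun χ P => eval u P * χ u) = 0) : F = 0 := by
  have sum_eq_zero : ∑ χ ∈ F.support, (fun u => eval u (F χ) * χ u) = 0 := by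
    ext u
    rw [Finset.sum_apply]
    exact h u
  have summand_eq_zero := (iSupIndep_iff_finsetSum_eq_zero_imp_eq_zero _).1
    iSupIndep_characterGenEigenspace F.support (fun χ u => eval u (F χ) * χ u)
    (fun χ _ =>
      eval_mul_addChar_mem_characterGenEigenspace (Pi.evalAddMonoidHom fun _ => R) (F χ) χ)
    sum_eq_zero
  ext1 χ
  by_contra hχ
  exact hχ (eq_zero_of_eval_mul_addChar_eq_zero
    (congrFun (summand_eq_zero χ (Finsupp.mem_support_iff.2 hχ))))

theorem eq_of_finsuppSum_eval_mul_addChar_eq {F G : AddChar (σ → R) R →₀ MvPolynomial σ R}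
    (h : ∀ u, (F.sum fun χ P => eval u P * χ u) = G.sum fun χ P => eval u P * χ u) : F = G := by
  refine sub_eq_zero.1 (eq_zero_of_finsuppSum_eval_mul_addChar_eq_zero fun u => ?_)
  rw [Finsupp.sum_sub_index fun χ P Q => by rw [map_sub, sub_mul], h u, sub_self]

theorem exp_sum_polynomial_unique_general {ι ι' : Type*} [Fintype ι] [Fintype ι']
    (χ : ι → AddChar (σ → R) R) (χ' : ι' → AddChar (σ → R) R)
    (hχ : Function.Injective χ) (hχ' : Function.Injective χ')
    (P : ι → MvPolynomial σ R) (P' : ι' → MvPolynomial σ R)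
    (hP : ∀ i, P i ≠ 0) (hP' : ∀ j, P' j ≠ 0)
    (h : ∀ u, ∑ i, eval u (P i) * χ i u = ∑ j, eval u (P' j) * χ' j u) :
    ∃ e : ι ≃ ι', ∀ i, χ' (e i) = χ i ∧ P' (e i) = P i := by
  let F := Finsupp.equivFunOnFinite.symm P
  let F' := Finsupp.equivFunOnFinite.symm P'
  have mapDomain_eq : F.mapDomain χ = F'.mapDomain χ' :=
    eq_of_finsuppSum_eval_mul_addChar_eq fun u => by
      rw [finsuppSum_mapDomain_eval_mul_addChar, finsuppSum_mapDomain_eval_mul_addChar]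
      exact h u
  exact exists_equiv_of_mapDomain_eq_mapDomain hχ hχ' hP hP' mapDomain_eq

end Uniqueness

/-- The character `u ↦ exp (b · u)` of `ℝ^σ`, written with the dot product spelled out. -/
noncomputable def expDotCharacter {σ : Type*} [Fintype σ] (b : σ → ℝ) : AddChar (σ → ℝ) ℝ where
  toFun u := Real.exp (∑ j, b j * u j)
  map_zero_eq_one' := by simp
  map_add_eq_mul' u v := by
    simp only [Pi.add_apply, mul_add, Finset.sum_add_distrib, Real.exp_add]

theorem expDotCharacter_injective {σ : Type*} [Fintype σ] :
    Function.Injective (expDotCharacter : (σ → ℝ) → AddChar (σ → ℝ) ℝ) := fun _ _ h =>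
  dotProduct_eq _ _ fun u => Real.exp_injective (DFunLike.congr_fun h u)

/-- Multivariate uniqueness of exponential sums: a finite sum `∑ i, Pᵢ(u) exp(βᵢ·u)` with
pairwise distinct exponent vectors `βᵢ ∈ ℝ^m` and nonzero polynomial coefficients `Pᵢ`
determines its exponent vectors and the coefficient attached to each of them (the analytic core
of Proposition 2.5 of the paper). -/
theorem exp_sum_polynomial_unique
    (m r r' : ℕ)
    (β : Fin r → (Fin m → ℝ)) (β' : Fin r' → (Fin m → ℝ))
    (hβ : Function.Injective β) (hβ' : Function.Injective β')
    (P : Fin r → MvPolynomial (Fin m) ℝ) (P' : Fin r' → MvPolynomial (Fin m) ℝ)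
    (hP : ∀ i, P i ≠ 0) (hP' : ∀ j, P' j ≠ 0)
    (h : ∀ u : Fin m → ℝ,
      ∑ i, MvPolynomial.eval u (P i) * Real.exp (∑ j, β i j * u j) =
      ∑ i, MvPolynomial.eval u (P' i) * Real.exp (∑ j, β' i j * u j)) :
    r = r' ∧ ∃ e : Fin r ≃ Fin r', ∀ i, β' (e i) = β i ∧ P' (e i) = P i := by
  obtain ⟨e, he⟩ := exp_sum_polynomial_unique_general (expDotCharacter ∘ β) (expDotCharacter ∘ β')
    (expDotCharacter_injective.comp hβ) (expDotCharacter_injective.comp hβ') P P' hP hP' h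
  exact ⟨Fin.equiv_iff_eq.1 ⟨e⟩, e, fun i => (he i).imp_left (expDotCharacter_injective ·)⟩
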